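/- Let A, A_1, A_2, A_0 be commutative rings forming a cartesian (pullback) square with maps f_1 : A → A_1, f_2 : A → A_2, j_1 : A_1 → A_0, j_2 : A_2 → A_0, where j_2 is surjective. Let P and Q be finitely generated projective A-modules with P_i = P ⊗_A A_i and Q_i = Q ⊗_A A_i. If the base-change map Aut_{A_2}(P_2) → Aut_{A_0}(P_0) is surjective and Q_i ≅ P_i as A_i-modules for i = 1, 2, then P ≅ Q as A-modules. -/

import Mathlib

/-! Statement 5 (Wiemers, Proposition 2.1(ii), first part): in a cartesian square of
commutative rings with `j₂` surjective, if `Aut_{A₂}(P₂) → Aut_{A₀}(P₀)` is surjective and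
`Q ⊗ A_i ≅ P ⊗ A_i` for `i = 1, 2`, then `P ≅ Q`. -/

universe u

open TensorProduct

/-! A square of modules is cartesian exactly when `0 → M → M₁ × M₂ → M₀` is exact, so tensoring the
square of rings with a flat module `P` exhibits `P` as the fiber product of `P₁` and `P₂` over `P₀`.
Hence isomorphisms `Q₁ ≃ P₁` and `Q₂ ≃ P₂` that agree over `A₀` glue to an isomorphism `Q ≃ P`. Two
arbitrary isomorphisms differ over `A₀` by an automorphism of `P₀`; composing the second one with
a lift of that automorphism to `P₂` makes them agree. -/

section FiberProduct

/-- The commutative square of linear maps `g₁ ∘ f₁ = g₂ ∘ f₂` is cartesian: `M` is the fiber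
product of `M₁` and `M₂` over `M₀`, stated elementwise. -/
structure IsFiberProduct {R M M₁ M₂ M₀ : Type*} [Semiring R]
    [AddCommMonoid M] [AddCommMonoid M₁] [AddCommMonoid M₂] [AddCommMonoid M₀]
    [Module R M] [Module R M₁] [Module R M₂] [Module R M₀]
    (f₁ : M →ₗ[R] M₁) (f₂ : M →ₗ[R] M₂) (g₁ : M₁ →ₗ[R] M₀) (g₂ : M₂ →ₗ[R] M₀) : Prop where
  comm (x : M) : g₁ (f₁ x) = g₂ (f₂ x)
  existsUnique (x₁ : M₁) (x₂ : M₂) : g₁ x₁ = g₂ x₂ → ∃! x : M, f₁ x = x₁ ∧ f₂ x = x₂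

namespace IsFiberProduct

section Semiring

variable {R M M₁ M₂ M₀ M' M₁' M₂' M₀' : Type*} [Semiring R]
  [AddCommMonoid M] [AddCommMonoid M₁] [AddCommMonoid M₂] [AddCommMonoid M₀]
  [AddCommMonoid M'] [AddCommMonoid M₁'] [AddCommMonoid M₂'] [AddCommMonoid M₀']
  [Module R M] [Module R M₁] [Module R M₂] [Module R M₀]
  [Module R M'] [Module R M₁'] [Module R M₂'] [Module R M₀']
  {f₁ : M →ₗ[R] M₁} {f₂ : M →ₗ[R] M₂} {g₁ : M₁ →ₗ[R] M₀} {g₂ : M₂ →ₗ[R] M₀}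
  {f₁' : M' →ₗ[R] M₁'} {f₂' : M' →ₗ[R] M₂'} {g₁' : M₁' →ₗ[R] M₀'} {g₂' : M₂' →ₗ[R] M₀'}

theorem injective_prod (h : IsFiberProduct f₁ f₂ g₁ g₂) : Function.Injective (f₁.prod f₂) := by
  intro x y hxy
  obtain ⟨h₁, h₂⟩ := Prod.ext_iff.mp hxy
  exact (h.existsUnique _ _ (h.comm y)).unique ⟨h₁, h₂⟩ ⟨rfl, rfl⟩

theorem range_prod (h : IsFiberProduct f₁ f₂ g₁ g₂) :
    (f₁.prod f₂).range = (g₁ ∘ₗ .fst R M₁ M₂).eqLocus (g₂ ∘ₗ .snd R M₁ M₂) := by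
  ext ⟨x₁, x₂⟩
  constructor
  · rintro ⟨x, hx⟩
    obtain ⟨rfl, rfl⟩ := Prod.ext_iff.mp hx
    exact h.comm x
  · intro hx
    obtain ⟨x, h₁, h₂⟩ := (h.existsUnique x₁ x₂ hx).exists
    exact ⟨x, Prod.ext h₁ h₂⟩

theorem nonempty_linearEquiv (h : IsFiberProduct f₁ f₂ g₁ g₂)
    (h' : IsFiberProduct f₁' f₂' g₁' g₂')
    (e₁ : M₁ ≃ₗ[R] M₁') (e₂ : M₂ ≃ₗ[R] M₂') (e₀ : M₀ ≃ₗ[R] M₀')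
    (comm₁ : ∀ x, e₀ (g₁ x) = g₁' (e₁ x)) (comm₂ : ∀ x, e₀ (g₂ x) = g₂' (e₂ x)) :
    Nonempty (M ≃ₗ[R] M') := by
  have map_range : (f₁.prod f₂).range.map (e₁.prodCongr e₂ : M₁ × M₂ →ₗ[R] M₁' × M₂') =
      (f₁'.prod f₂').range := by
    rw [h.range_prod, h'.range_prod]
    ext x'
    obtain ⟨x, rfl⟩ := (e₁.prodCongr e₂).surjective x'
    simp [← comm₁, ← comm₂]
  exact ⟨LinearEquiv.ofInjective _ h.injective_prod ≪≫ₗ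
    (e₁.prodCongr e₂).ofSubmodules _ _ map_range ≪≫ₗ
    (LinearEquiv.ofInjective _ h'.injective_prod).symm⟩

end Semiring

theorem iff_injective_and_exact {R M M₁ M₂ M₀ : Type*} [Ring R]
    [AddCommGroup M] [AddCommGroup M₁] [AddCommGroup M₂] [AddCommGroup M₀]
    [Module R M] [Module R M₁] [Module R M₂] [Module R M₀]
    {f₁ : M →ₗ[R] M₁} {f₂ : M →ₗ[R] M₂} {g₁ : M₁ →ₗ[R] M₀} {g₂ : M₂ →ₗ[R] M₀} :
    IsFiberProduct f₁ f₂ g₁ g₂ ↔ Function.Injective (f₁.prod f₂) ∧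
      Function.Exact (f₁.prod f₂) (g₁ ∘ₗ .fst R M₁ M₂ - g₂ ∘ₗ .snd R M₁ M₂) := by
  constructor
  · intro h
    refine ⟨h.injective_prod, ?_⟩
    rw [LinearMap.exact_iff, h.range_prod, LinearMap.eqLocus_eq_ker_sub]
  · rintro ⟨hinj, hexact⟩
    refine ⟨fun x ↦ sub_eq_zero.mp (hexact.apply_apply_eq_zero x), fun x₁ x₂ hx ↦ ?_⟩
    obtain ⟨x, hx⟩ := (hexact (x₁, x₂)).mp (sub_eq_zero.mpr hx)
    obtain ⟨h₁, h₂⟩ := Prod.ext_iff.mp hx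
    exact ⟨x, ⟨h₁, h₂⟩, fun y hy ↦ hinj ((Prod.ext hy.1 hy.2).trans hx.symm)⟩

theorem rTensor {R M M₁ M₂ M₀ : Type*} [CommRing R]
    [AddCommGroup M] [AddCommGroup M₁] [AddCommGroup M₂] [AddCommGroup M₀]
    [Module R M] [Module R M₁] [Module R M₂] [Module R M₀]
    {f₁ : M →ₗ[R] M₁} {f₂ : M →ₗ[R] M₂} {g₁ : M₁ →ₗ[R] M₀} {g₂ : M₂ →ₗ[R] M₀}
    (P : Type*) [AddCommGroup P] [Module R P] [Module.Flat R P]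
    (h : IsFiberProduct f₁ f₂ g₁ g₂) :
    IsFiberProduct (f₁.rTensor P) (f₂.rTensor P) (g₁.rTensor P) (g₂.rTensor P) := by
  obtain ⟨hinj, hexact⟩ := iff_injective_and_exact.mp h
  let e := TensorProduct.prodLeft R R M₁ M₂ P
  have hf : (f₁.rTensor P).prod (f₂.rTensor P) = e.toLinearMap ∘ₗ (f₁.prod f₂).rTensor P := by
    ext <;> simp [e]
  have hg : (g₁.rTensor P ∘ₗ .fst R _ _ - g₂.rTensor P ∘ₗ .snd R _ _) ∘ₗ e.toLinearMap =
      (g₁ ∘ₗ .fst R M₁ M₂ - g₂ ∘ₗ .snd R M₁ M₂).rTensor P := by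
    ext <;> simp [e]
  refine iff_injective_and_exact.mpr ⟨?_, ?_⟩
  · rw [hf]
    exact e.injective.comp (Module.Flat.rTensor_preserves_injective_linearMap _ hinj)
  · exact (Module.Flat.rTensor_exact P hexact).of_ladder_linearEquiv_of_exact
      (e₁ := .refl R _) (e₂ := e) (e₃ := .refl R _) (by simpa using hf) (by simpa using hg)

end IsFiberProduct

end FiberProduct

section ExtendScalars

open TensorProduct.AlgebraTensorModule (cancelBaseChange)

variable {A B : Type*} (C : Type*) [CommSemiring A] [CommSemiring B] [Semiring C]
  [Algebra A B] [Algebra A C] [Algebra B C] [IsScalarTower A B C]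
  {M N L : Type*} [AddCommMonoid M] [Module A M] [AddCommMonoid N] [Module A N]
  [AddCommMonoid L] [Module A L]

/-- The base change along `B → C` of an isomorphism `B ⊗[A] M ≃ B ⊗[A] N`, regarded as an
isomorphism `C ⊗[A] M ≃ C ⊗[A] N` by means of `C ⊗[B] (B ⊗[A] M) ≃ C ⊗[A] M`. For `M = N` it is
the map `Aut_B(M ⊗ B) → Aut_C(M ⊗ C)`. -/
noncomputable def extendScalars (φ : (B ⊗[A] M) ≃ₗ[B] (B ⊗[A] N)) :
    (C ⊗[A] M) ≃ₗ[C] (C ⊗[A] N) :=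
  (cancelBaseChange A B C C M).symm ≪≫ₗ φ.baseChange B C _ _ ≪≫ₗ cancelBaseChange A B C C N

theorem cancelBaseChange_one_tmul (x : B ⊗[A] M) :
    cancelBaseChange A B C C M (1 ⊗ₜ x) =
      (IsScalarTower.toAlgHom A B C).toLinearMap.rTensor M x := by
  induction x with
  | zero => simp
  | tmul b m => simp [Algebra.smul_def]
  | add x y hx hy => rw [tmul_add, map_add, hx, hy, map_add]

theorem extendScalars_rTensor (φ : (B ⊗[A] M) ≃ₗ[B] (B ⊗[A] N)) (x : B ⊗[A] M) :
    extendScalars C φ ((IsScalarTower.toAlgHom A B C).toLinearMap.rTensor M x) =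
      (IsScalarTower.toAlgHom A B C).toLinearMap.rTensor N (φ x) := by
  simp [extendScalars, ← cancelBaseChange_one_tmul]

variable {C} in
theorem extendScalars_eq_of_forall {φ : (B ⊗[A] M) ≃ₗ[B] (B ⊗[A] N)}
    {ψ : (C ⊗[A] M) ≃ₗ[C] (C ⊗[A] N)}
    (h : ∀ x, ψ ((IsScalarTower.toAlgHom A B C).toLinearMap.rTensor M x) =
      (IsScalarTower.toAlgHom A B C).toLinearMap.rTensor N (φ x)) :
    extendScalars C φ = ψ := by
  apply LinearEquiv.toLinearMap_injective
  ext m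
  simpa using (extendScalars_rTensor C φ (1 ⊗ₜ m)).trans (h (1 ⊗ₜ m)).symm

theorem extendScalars_trans (φ : (B ⊗[A] M) ≃ₗ[B] (B ⊗[A] N))
    (ψ : (B ⊗[A] N) ≃ₗ[B] (B ⊗[A] L)) :
    extendScalars C (φ ≪≫ₗ ψ) = extendScalars C φ ≪≫ₗ extendScalars C ψ :=
  extendScalars_eq_of_forall fun x ↦ by simp [extendScalars_rTensor]

end ExtendScalars

section Patching

variable {A A₁ A₂ A₀ : Type*} [CommRing A] [CommRing A₁] [CommRing A₂] [Ring A₀]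
  [Algebra A A₁] [Algebra A A₂] [Algebra A A₀] [Algebra A₁ A₀] [Algebra A₂ A₀]
  [IsScalarTower A A₁ A₀] [IsScalarTower A A₂ A₀]
  {P Q : Type*} [AddCommGroup P] [Module A P] [Module.Flat A P]
  [AddCommGroup Q] [Module A Q] [Module.Flat A Q]

theorem nonempty_linearEquiv_of_extendScalars_eq
    (hcart : IsFiberProduct (Algebra.linearMap A A₁) (Algebra.linearMap A A₂)
      (IsScalarTower.toAlgHom A A₁ A₀).toLinearMap (IsScalarTower.toAlgHom A A₂ A₀).toLinearMap)
    (φ₁ : (A₁ ⊗[A] P) ≃ₗ[A₁] (A₁ ⊗[A] Q)) (φ₂ : (A₂ ⊗[A] P) ≃ₗ[A₂] (A₂ ⊗[A] Q))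
    (h : extendScalars A₀ φ₁ = extendScalars A₀ φ₂) : Nonempty (P ≃ₗ[A] Q) := by
  obtain ⟨e⟩ := (hcart.rTensor P).nonempty_linearEquiv (hcart.rTensor Q)
    (φ₁.restrictScalars A) (φ₂.restrictScalars A) ((extendScalars A₀ φ₁).restrictScalars A)
    (extendScalars_rTensor A₀ φ₁) (h ▸ extendScalars_rTensor A₀ φ₂)
  exact ⟨(TensorProduct.lid A P).symm ≪≫ₗ e ≪≫ₗ TensorProduct.lid A Q⟩

theorem iso_of_cartesian_square_of_iso_baseChange_general
    (hcart : ∀ (a₁ : A₁) (a₂ : A₂), algebraMap A₁ A₀ a₁ = algebraMap A₂ A₀ a₂ →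
      ∃! a : A, algebraMap A A₁ a = a₁ ∧ algebraMap A A₂ a = a₂)
    (hAut : ∀ τ : (A₀ ⊗[A] P) ≃ₗ[A₀] (A₀ ⊗[A] P),
      ∃ σ : (A₂ ⊗[A] P) ≃ₗ[A₂] (A₂ ⊗[A] P), ∀ x : A₂ ⊗[A] P,
        τ ((IsScalarTower.toAlgHom A A₂ A₀).toLinearMap.rTensor P x) =
          (IsScalarTower.toAlgHom A A₂ A₀).toLinearMap.rTensor P (σ x))
    (h₁ : Nonempty ((A₁ ⊗[A] Q) ≃ₗ[A₁] (A₁ ⊗[A] P)))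
    (h₂ : Nonempty ((A₂ ⊗[A] Q) ≃ₗ[A₂] (A₂ ⊗[A] P))) :
    Nonempty (P ≃ₗ[A] Q) := by
  have hfiber : IsFiberProduct (Algebra.linearMap A A₁) (Algebra.linearMap A A₂)
      (IsScalarTower.toAlgHom A A₁ A₀).toLinearMap
      (IsScalarTower.toAlgHom A A₂ A₀).toLinearMap :=
    ⟨fun a ↦ by simp, hcart⟩
  obtain ⟨φ₁⟩ := h₁
  obtain ⟨φ₂⟩ := h₂
  obtain ⟨σ, hσ⟩ := hAut ((extendScalars A₀ φ₂).symm ≪≫ₗ extendScalars A₀ φ₁)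
  have hagree : extendScalars A₀ φ₁ = extendScalars A₀ (φ₂ ≪≫ₗ σ) := by
    rw [extendScalars_trans, extendScalars_eq_of_forall hσ, ← LinearEquiv.trans_assoc,
      LinearEquiv.self_trans_symm, LinearEquiv.refl_trans]
  exact (nonempty_linearEquiv_of_extendScalars_eq hfiber φ₁ (φ₂ ≪≫ₗ σ) hagree).map .symm

end Patching

theorem iso_of_cartesian_square_of_iso_baseChange
    (A A₁ A₂ A₀ : Type u) [CommRing A] [CommRing A₁] [CommRing A₂] [CommRing A₀]
    [IsNoetherianRing A] [IsNoetherianRing A₁] [IsNoetherianRing A₂] [IsNoetherianRing A₀]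
    [Algebra A A₁] [Algebra A A₂] [Algebra A A₀] [Algebra A₁ A₀] [Algebra A₂ A₀]
    [IsScalarTower A A₁ A₀] [IsScalarTower A A₂ A₀]
    (hj₂ : Function.Surjective (algebraMap A₂ A₀))
    (hcart : ∀ (a₁ : A₁) (a₂ : A₂), algebraMap A₁ A₀ a₁ = algebraMap A₂ A₀ a₂ →
      ∃! a : A, algebraMap A A₁ a = a₁ ∧ algebraMap A A₂ a = a₂)
    (P Q : Type u) [AddCommGroup P] [Module A P] [Module.Finite A P] [Module.Projective A P]
    [AddCommGroup Q] [Module A Q] [Module.Finite A Q] [Module.Projective A Q]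
    (hAut : ∀ τ : (A₀ ⊗[A] P) ≃ₗ[A₀] (A₀ ⊗[A] P),
      ∃ σ : (A₂ ⊗[A] P) ≃ₗ[A₂] (A₂ ⊗[A] P),
        ∀ x : A₂ ⊗[A] P,
          τ (LinearMap.rTensor P (IsScalarTower.toAlgHom A A₂ A₀).toLinearMap x) =
            LinearMap.rTensor P (IsScalarTower.toAlgHom A A₂ A₀).toLinearMap (σ x))
    (h₁ : Nonempty ((A₁ ⊗[A] Q) ≃ₗ[A₁] (A₁ ⊗[A] P)))
    (h₂ : Nonempty ((A₂ ⊗[A] Q) ≃ₗ[A₂] (A₂ ⊗[A] P))) :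
    Nonempty (P ≃ₗ[A] Q) :=
  iso_of_cartesian_square_of_iso_baseChange_general hcart hAut h₁ h₂
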